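/- arXiv:2412.02064 — 2 statements merged into one kernel-verified Lean document; each statement's English description precedes it below -/
import Mathlib

section
/- Let m ≥ 1 and let J = D_m be the m×m antidiagonal matrix. Let M be an m×m complex matrix satisfying M·J = −J·Mᵀ, and suppose I + M is invertible (I the m×m identity matrix). Then the matrix g := (I + M)^{−1}(I − M) satisfies g·J·gᵀ = J and det(g) = 1. -/
open Matrix

/-- The `m × m` antidiagonal matrix `D_m`, with `(D_m)_{ij} = 1` if `i + j = m + 1`
(1-indexed) and `0` otherwise. -/
noncomputable def Dmat (m : ℕ) : Matrix (Fin m) (Fin m) ℂ :=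
  fun i j => if (i : ℕ) + (j : ℕ) = m - 1 then 1 else 0

/-!
Put `A = 1 + M` and `B = 1 - M`. The relation `M J = -J Mᵀ` says that moving `J` across a
transpose exchanges these two: `A J = J Bᵀ` and `B J = J Aᵀ`. Since `A` and `B` commute,
`A⁻¹ B J Bᵀ A⁻ᵀ = A⁻¹ B A J A⁻ᵀ = B J A⁻ᵀ = J`. Taking determinants in `B J = J Aᵀ` and cancelling
`det J` gives `det B = det A`, so the sign of `det (A⁻¹ B)`, which orthogonality alone leaves open,
is `+1`.
-/

theorem Dmat_eq_permMatrix_rev (m : ℕ) : Dmat m = Fin.revPerm.permMatrix ℂ := by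
  ext i j
  have h : (i : ℕ) + j = m - 1 ↔ j = i.rev := by
    rw [Fin.ext_iff, Fin.val_rev]
    omega
  simp only [Dmat, h, PEquiv.toMatrix_toPEquiv_apply, Pi.single_apply, Fin.revPerm_apply]

theorem isUnit_det_Dmat (m : ℕ) : IsUnit (Dmat m).det := by
  rw [Dmat_eq_permMatrix_rev, det_permutation]
  exact (Equiv.Perm.sign Fin.revPerm).isUnit.map (Int.castRingHom ℂ)

section SkewAdjoint

variable {n R : Type*} [Fintype n] [DecidableEq n] [Ring R] {J M : Matrix n n R}

theorem semiconjBy_transpose_one_sub (hM : M * J = -(J * Mᵀ)) :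
    SemiconjBy J (1 - M)ᵀ (1 + M) := by
  have hskew : SemiconjBy J (-Mᵀ) M := by rw [SemiconjBy, mul_neg, hM]
  simpa only [transpose_add, transpose_neg, transpose_one, sub_eq_add_neg] using
    (SemiconjBy.one_right J).add_right hskew

theorem semiconjBy_transpose_one_add (hM : M * J = -(J * Mᵀ)) :
    SemiconjBy J (1 + M)ᵀ (1 - M) := by
  have hneg : -M * J = -(J * (-M)ᵀ) := by rw [neg_mul, hM, transpose_neg, mul_neg]
  simpa only [sub_neg_eq_add, ← sub_eq_add_neg] using semiconjBy_transpose_one_sub hneg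

end SkewAdjoint

section CommRing

variable {n R : Type*} [Fintype n] [DecidableEq n] [CommRing R] {A B J M : Matrix n n R}

theorem inv_mul_mul_mul_transpose_eq_self (hA : IsUnit A) (hAB : Commute A B)
    (hJA : SemiconjBy J Bᵀ A) (hJB : SemiconjBy J Aᵀ B) :
    A⁻¹ * B * J * (A⁻¹ * B)ᵀ = J := by
  have hdet : IsUnit A.det := (isUnit_iff_isUnit_det A).mp hA
  have hdetT : IsUnit Aᵀ.det := by rwa [det_transpose]
  calc A⁻¹ * B * J * (A⁻¹ * B)ᵀ
      = A⁻¹ * B * (J * Bᵀ) * Aᵀ⁻¹ := by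
        simp only [transpose_mul, transpose_nonsing_inv, Matrix.mul_assoc]
    _ = A⁻¹ * (B * A) * J * Aᵀ⁻¹ := by simp only [hJA.eq, Matrix.mul_assoc]
    _ = A⁻¹ * (A * (B * J)) * Aᵀ⁻¹ := by simp only [← hAB.eq, Matrix.mul_assoc]
    _ = J * Aᵀ * Aᵀ⁻¹ := by rw [nonsing_inv_mul_cancel_left _ _ hdet, hJB.eq]
    _ = J := mul_nonsing_inv_cancel_right _ _ hdetT

theorem det_eq_of_semiconjBy (hJ : J.det ∈ nonZeroDivisors R) (h : SemiconjBy J A B) :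
    A.det = B.det := by
  have hdet : J.det * A.det = B.det * J.det := by rw [← det_mul, h.eq, det_mul]
  rwa [mul_comm B.det, mul_cancel_left_mem_nonZeroDivisors hJ] at hdet

/-- The Cayley transform `(1 + M)⁻¹ (1 - M)` of a square matrix, which carries matrices
skew-adjoint for a bilinear form to isometries of that form. It is meaningful only when `1 + M` is
invertible; otherwise the inverse, and with it the transform, is `0`. -/
noncomputable def cayleyTransform (M : Matrix n n R) : Matrix n n R :=
  (1 + M)⁻¹ * (1 - M)

theorem cayleyTransform_mul_mul_transpose (hM : M * J = -(J * Mᵀ)) (hinv : IsUnit (1 + M)) :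
    cayleyTransform M * J * (cayleyTransform M)ᵀ = J := by
  have hcomm : Commute (1 + M) (1 - M) :=
    (Commute.one_left _).add_left ((Commute.one_right M).sub_right (Commute.refl M))
  exact inv_mul_mul_mul_transpose_eq_self hinv hcomm (semiconjBy_transpose_one_sub hM)
    (semiconjBy_transpose_one_add hM)

theorem det_cayleyTransform (hJ : J.det ∈ nonZeroDivisors R) (hM : M * J = -(J * Mᵀ))
    (hinv : IsUnit (1 + M)) : (cayleyTransform M).det = 1 := by
  have hdet : (1 + M).det = (1 - M).det := by
    rw [← det_transpose (1 + M), det_eq_of_semiconjBy hJ (semiconjBy_transpose_one_add hM)]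
  rw [cayleyTransform, det_mul, ← hdet,
    det_nonsing_inv_mul_det _ ((isUnit_iff_isUnit_det _).mp hinv)]

theorem cayley_transform_orthogonal_general (hJ : J.det ∈ nonZeroDivisors R)
    (hM : M * J = -(J * Mᵀ)) (hinv : IsUnit (1 + M)) :
    cayleyTransform M * J * (cayleyTransform M)ᵀ = J ∧ (cayleyTransform M).det = 1 :=
  ⟨cayleyTransform_mul_mul_transpose hM hinv, det_cayleyTransform hJ hM hinv⟩

end CommRing

theorem cayley_transform_orthogonal
    (m : ℕ) (hm : 1 ≤ m) (M : Matrix (Fin m) (Fin m) ℂ)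
    (hM : M * Dmat m = -(Dmat m * Mᵀ))
    (hinv : IsUnit (1 + M)) :
    ((1 + M)⁻¹ * (1 - M)) * Dmat m * ((1 + M)⁻¹ * (1 - M))ᵀ = Dmat m ∧
    ((1 + M)⁻¹ * (1 - M)).det = 1 :=
  cayley_transform_orthogonal_general (isUnit_det_Dmat m).mem_nonZeroDivisors hM hinv
end

section
/- Let n ≥ 1, let w ∈ S_n, and let E^• be the coordinate flag in ℂ^n. Let M = (m_{ij}) be any n×n complex matrix satisfying: m_{ij} = 1 if i = w(j); m_{ij} = 0 if i < w(j) or w^{−1}(i) < j; and m_{ij} arbitrary otherwise (a Stiefel-coordinate matrix for w). For i ∈ {1, …, n} let F_i be the span of the first i columns of M. Then F_• = (F_1 ⊂ F_2 ⊂ … ⊂ F_n) is a complete flag in ℂ^n and dim(F_i ∩ E^j) = k_w(i,j) for all i, j ∈ {1, …, n}; that is, the flag F_• lies in the Schubert cell Ω_w(E^•). -/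
open scoped Classical

/-- The coordinate flag in `ℂ^m`: `E^j` is the span of the standard basis
vectors `e_{j+1}, …, e_m` (1-indexed). -/
noncomputable def coordFlag (m : ℕ) (j : ℕ) : Submodule ℂ (Fin m → ℂ) :=
  Submodule.span ℂ ((fun r : Fin m => Pi.single r (1 : ℂ)) '' {r | j ≤ (r : ℕ)})

/-- `k_w(i,j) = #{r ∈ {1,…,i} : w(r) > j}` (with `w` 0-indexed, `i`, `j` 1-indexed). -/
noncomputable def kNum (m : ℕ) (w : Equiv.Perm (Fin m)) (i j : ℕ) : ℕ :=
  (Finset.univ.filter (fun r : Fin m => (r : ℕ) + 1 ≤ i ∧ j < (w r : ℕ) + 1)).card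

/-- The flag `F` lies in the Schubert cell `Ω_w(E^•)`. -/
noncomputable def inSchubertCell (m : ℕ) (w : Equiv.Perm (Fin m))
    (F : ℕ → Submodule ℂ (Fin m → ℂ)) : Prop :=
  ∀ i ∈ Finset.Icc 1 m, ∀ j ∈ Finset.Icc 1 m,
    Module.finrank ℂ ↥(F i ⊓ coordFlag m j) = kNum m w i j

/-- The flag whose `i`-th subspace is the span of the first `i` columns of `M`. -/
noncomputable def stiefelFlag (m : ℕ) (M : Matrix (Fin m) (Fin m) ℂ) (i : ℕ) :
    Submodule ℂ (Fin m → ℂ) :=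
  Submodule.span ℂ ((fun j : Fin m => (fun r => M r j)) '' {j | (j : ℕ) < i})

/-!
The `j`-th column of `M` has its topmost nonzero entry in row `w j`, and these rows are distinct.
A linear combination of vectors with distinct leading positions lies in the coordinate subspace of
an upper set `U` exactly when every vector occurring in it has its leading position in `U`: the
earliest leading position occurring outside `U` could not be cancelled. For `U = ∅` this is
linear independence of the columns; for `U = {j + 1, …, n}` it says that `F_i ∩ E^j` is spanned by
the columns `r ≤ i` with `w r > j`, of which there are `k_w(i, j)`.
-/

section LeadingEntries

open Finsupp Submodule

variable {ι κ R : Type*} [LinearOrder κ]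

lemma mem_supported_of_linearCombination_row_eq_zero [Semiring R] [NoZeroDivisors R]
    {A : Matrix ι κ R} {p : ι → κ} (hA : ∀ k, A.IsLeadingEntry k (p k)) (hp : p.Injective)
    {U : Set κ} (hU : IsUpperSet U) {l : ι →₀ R}
    (hl : ∀ r ∉ U, linearCombination R A.row l r = 0) :
    l ∈ supported R R (p ⁻¹' U) := by
  refine (mem_supported' R l).2 fun k hk => by_contra fun hlk => ?_
  -- Among the offending rows, take the one whose leading entry is leftmost: it is the only
  -- row that contributes to the combination in the column of that entry.
  obtain ⟨m, hm, hmin⟩ := (l.support.filter (p · ∉ U)).exists_min_image p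
    ⟨k, Finset.mem_filter.2 ⟨mem_support_iff.2 hlk, hk⟩⟩
  obtain ⟨hlm, hmU⟩ := Finset.mem_filter.1 hm
  have other_terms : ∀ b ∈ l.support, b ≠ m → l b * A b (p m) = 0 := by
    intro b hb hbm
    have hlt : p m < p b := by
      by_cases hbU : p b ∈ U
      · exact lt_of_not_ge fun hle => hmU (hU hle hbU)
      · exact (hmin b (Finset.mem_filter.2 ⟨hb, hbU⟩)).lt_of_ne (hp.ne hbm.symm)
    rw [(hA b).1 _ hlt, mul_zero]
  have hsum : linearCombination R A.row l (p m) = l m * A m (p m) := by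
    simp only [linearCombination_apply, Finsupp.sum, Finset.sum_apply, Pi.smul_apply,
      smul_eq_mul, Matrix.row_apply]
    exact Finset.sum_eq_single_of_mem m hlm other_terms
  exact mul_ne_zero (mem_support_iff.1 hlm) (hA m).2 (hsum.symm.trans (hl _ hmU))

lemma linearIndependent_row_of_isLeadingEntry [Ring R] [NoZeroDivisors R]
    {A : Matrix ι κ R} {p : ι → κ} (hA : ∀ k, A.IsLeadingEntry k (p k)) (hp : p.Injective) :
    LinearIndependent R A.row := by
  refine linearIndependent_iff.2 fun l hl => ?_
  have hsupp : l ∈ supported R R (p ⁻¹' ∅) :=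
    mem_supported_of_linearCombination_row_eq_zero hA hp isUpperSet_empty fun r _ => congrFun hl r
  simpa only [Set.preimage_empty, supported_empty, mem_bot] using hsupp

lemma row_mem_spanSubset_of_isLeadingEntry [Finite κ] [Semiring R]
    {A : Matrix ι κ R} {k : ι} {c : κ} (hc : A.IsLeadingEntry k c)
    {U : Set κ} (hU : IsUpperSet U) (hcU : c ∈ U) :
    A.row k ∈ Pi.spanSubset R U :=
  Pi.mem_spanSubset_iff.2 fun r hr => hc.1 r <| lt_of_not_ge fun hcr => hr (hU hcr hcU)

lemma linearCombination_row_mem_spanSubset_iff [Finite κ] [Semiring R] [NoZeroDivisors R]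
    {A : Matrix ι κ R} {p : ι → κ} (hA : ∀ k, A.IsLeadingEntry k (p k)) (hp : p.Injective)
    {U : Set κ} (hU : IsUpperSet U) {l : ι →₀ R} :
    linearCombination R A.row l ∈ Pi.spanSubset R U ↔ l ∈ supported R R (p ⁻¹' U) := by
  refine ⟨fun hl => mem_supported_of_linearCombination_row_eq_zero hA hp hU
    (Pi.mem_spanSubset_iff.1 hl), fun hl => ?_⟩
  have hspan : span R (A.row '' (p ⁻¹' U)) ≤ Pi.spanSubset R U :=
    span_le.2 <| Set.image_subset_iff.2 fun k hk =>
      row_mem_spanSubset_of_isLeadingEntry (hA k) hU hk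
  exact hspan ((mem_span_image_iff_linearCombination R).2 ⟨l, hl, rfl⟩)

lemma span_row_image_inf_spanSubset [Finite κ] [Semiring R] [NoZeroDivisors R]
    {A : Matrix ι κ R} {p : ι → κ} (hA : ∀ k, A.IsLeadingEntry k (p k)) (hp : p.Injective)
    {U : Set κ} (hU : IsUpperSet U) (S : Set ι) :
    span R (A.row '' S) ⊓ Pi.spanSubset R U = span R (A.row '' (S ∩ p ⁻¹' U)) := by
  have hcomap : (Pi.spanSubset R U).comap (linearCombination R A.row) =
      supported R R (p ⁻¹' U) :=
    Submodule.ext fun _ => linearCombination_row_mem_spanSubset_iff hA hp hU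
  rw [span_image_eq_map_linearCombination, map_inf_eq_map_inf_comap, hcomap,
    ← supported_inter, ← span_image_eq_map_linearCombination]

end LeadingEntries

lemma finrank_span_image_eq_ncard {ι R V : Type*} [Ring R] [StrongRankCondition R]
    [AddCommGroup V] [Module R V] {v : ι → V} {S : Set ι} (hv : LinearIndepOn R v S) :
    Module.finrank R (Submodule.span R (v '' S)) = S.ncard :=
  congrArg ENat.toNat (toENat_rank_span_set hv)

section StiefelFlag

open scoped Matrix

lemma coordFlag_eq_spanSubset (m j : ℕ) :
    coordFlag m j = Pi.spanSubset ℂ {r : Fin m | j ≤ (r : ℕ)} := by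
  simp only [coordFlag, Pi.spanSubset, Pi.basisFun_apply]

lemma stiefelFlag_eq_span_row (m : ℕ) (M : Matrix (Fin m) (Fin m) ℂ) (i : ℕ) :
    stiefelFlag m M i = Submodule.span ℂ (Mᵀ.row '' {k : Fin m | (k : ℕ) < i}) :=
  rfl

lemma kNum_eq_ncard (m : ℕ) (w : Equiv.Perm (Fin m)) (i j : ℕ) :
    kNum m w i j = ({k : Fin m | (k : ℕ) < i} ∩ w ⁻¹' {r : Fin m | j ≤ (r : ℕ)}).ncard := by
  rw [kNum, ← Set.ncard_coe_finset, Finset.coe_filter_univ]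
  simp only [Order.add_one_le_iff, Order.lt_add_one_iff]
  rfl

lemma finrank_stiefelFlag {m : ℕ} {M : Matrix (Fin m) (Fin m) ℂ}
    (hM : LinearIndependent ℂ Mᵀ.row) {i : ℕ} (hi : i ≤ m) :
    Module.finrank ℂ (stiefelFlag m M i) = i := by
  rw [stiefelFlag_eq_span_row, finrank_span_image_eq_ncard (hM.linearIndepOn _),
    ← Finset.coe_filter_univ, Set.ncard_coe_finset, Fin.card_filter_val_lt, min_eq_right hi]

lemma finrank_stiefelFlag_inf_coordFlag {m : ℕ} {w : Equiv.Perm (Fin m)}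
    {M : Matrix (Fin m) (Fin m) ℂ} (hM : ∀ k, Mᵀ.IsLeadingEntry k (w k)) (i j : ℕ) :
    Module.finrank ℂ ↥(stiefelFlag m M i ⊓ coordFlag m j) = kNum m w i j := by
  have hupper : IsUpperSet {r : Fin m | j ≤ (r : ℕ)} := fun _ _ hab (ha : j ≤ _) => le_trans ha hab
  rw [stiefelFlag_eq_span_row, coordFlag_eq_spanSubset,
    span_row_image_inf_spanSubset hM w.injective hupper, kNum_eq_ncard]
  exact finrank_span_image_eq_ncard
    ((linearIndependent_row_of_isLeadingEntry hM w.injective).linearIndepOn _)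

theorem stiefel_coordinates_in_schubert_cell_general
    (n : ℕ) (w : Equiv.Perm (Fin n)) (M : Matrix (Fin n) (Fin n) ℂ)
    (hM : ∀ j, Mᵀ.IsLeadingEntry j (w j)) :
    (∀ i ∈ Finset.Icc 1 n, Module.finrank ℂ ↥(stiefelFlag n M i) = i) ∧
    stiefelFlag n M n = ⊤ ∧
    inSchubertCell n w (stiefelFlag n M) := by
  have hli : LinearIndependent ℂ Mᵀ.row :=
    linearIndependent_row_of_isLeadingEntry hM w.injective
  refine ⟨fun i hi => finrank_stiefelFlag hli (Finset.mem_Icc.1 hi).2, ?_,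
    fun i _ j _ => finrank_stiefelFlag_inf_coordFlag hM i j⟩
  exact Submodule.eq_top_of_finrank_eq
    ((finrank_stiefelFlag hli le_rfl).trans (Module.finrank_fin_fun ℂ).symm)

end StiefelFlag

theorem stiefel_coordinates_in_schubert_cell
    (n : ℕ) (hn : 1 ≤ n) (w : Equiv.Perm (Fin n))
    (M : Matrix (Fin n) (Fin n) ℂ)
    (h1 : ∀ i j : Fin n, i = w j → M i j = 1)
    (h0 : ∀ i j : Fin n, (i < w j ∨ w⁻¹ i < j) → M i j = 0) :
    (∀ i ∈ Finset.Icc 1 n, Module.finrank ℂ ↥(stiefelFlag n M i) = i) ∧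
    stiefelFlag n M n = ⊤ ∧
    inSchubertCell n w (stiefelFlag n M) :=
  stiefel_coordinates_in_schubert_cell_general n w M fun j =>
    ⟨fun i hi => h0 i j (.inl hi), ne_of_eq_of_ne (h1 _ j rfl) one_ne_zero⟩
end
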